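/- On ℝ^43 with coordinates z₁,…,z₄₃ and standard basis vectors e₁,…,e₄₃, define the smooth vector fields T₄(z) = −z₃·e₅ − e₇ − 4z₄·e₂₅ + z₈·e₂₇ − 3·e₂₈ + z₁₁·e₃₀ + 2z₁₃·e₃₂ + z₁₄·e₃₃ − 10z₅·e₃₅ − 3z₆·e₃₆ + (2z₂₈ − 2z₇)·e₃₇ − z₈·e₃₈ − 20z₂₅·e₃₉ − z₄₀·z₃·e₄₃, T₅(z) = −z₃·e₂₅ − e₂₇ − 5z₄·e₃₅ + z₈·e₃₇ − 3·e₃₈ − 15z₅·e₃₉, T₆(z) = −z₃·e₃₅ − e₃₇ − 6z₄·e₃₉, and T₇(z) = −z₃·e₃₉. Then [T₄, T₅] = 5·T₇, while [T₄, T₆] = 0, [T₄, T₇] = 0, [T₅, T₆] = 0, [T₅, T₇] = 0, and [T₆, T₇] = 0. -/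

import Mathlib

/-!
Since `T5`, `T6`, `T7` are affine and `T4` is affine apart from the single quadratic component
`-z₄₀ z₃` along `e 43`, each differential is obtained termwise from the fact that a coordinate
`zc n` is its own derivative (`hasFDerivAt_zc`, `fderiv_T4`, ..., `fderiv_T7`).  The brackets then
follow by evaluating coordinates on basis vectors.  Nearly all terms vanish because the components
of the fields rarely meet the coordinates on which the others depend: only the `e 5`-component
`-z₃` of `T4`, fed into `-15 z₅ e 39` of `T5`, and the `e 25`-component `-z₃` of `T5`, fed into
`-20 z₂₅ e 39` of `T4`, contribute, giving `(15 - 20) z₃ e 39 = 5 T7`.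
-/

noncomputable section

/-- ℝ^43 with coordinates z₁, …, z₄₃ (1-based). -/
abbrev V43 : Type := Fin 43 → ℝ

/-- The standard basis vector eₙ (1-based index). -/
def e (n : ℕ) : V43 := fun i => if (i : ℕ) = n - 1 then 1 else 0

/-- The coordinate zₙ (1-based index). -/
def zc (n : ℕ) (z : V43) : ℝ := if h : n - 1 < 43 then z ⟨n - 1, h⟩ else 0

/-- The vector field T₄ of Appendix A. -/
def T4 (z : V43) : V43 :=
  -(zc 3 z • e 5) - e 7 - (4 * zc 4 z) • e 25 + zc 8 z • e 27 - (3 : ℝ) • e 28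
    + zc 11 z • e 30 + (2 * zc 13 z) • e 32 + zc 14 z • e 33
    - (10 * zc 5 z) • e 35 - (3 * zc 6 z) • e 36 + (2 * zc 28 z - 2 * zc 7 z) • e 37
    - zc 8 z • e 38 - (20 * zc 25 z) • e 39 - (zc 40 z * zc 3 z) • e 43

/-- The vector field T₅ of Appendix A. -/
def T5 (z : V43) : V43 :=
  -(zc 3 z • e 25) - e 27 - (5 * zc 4 z) • e 35 + zc 8 z • e 37 - (3 : ℝ) • e 38
    - (15 * zc 5 z) • e 39

/-- The vector field T₆ of Appendix A. -/
def T6 (z : V43) : V43 := -(zc 3 z • e 35) - e 37 - (6 * zc 4 z) • e 39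

/-- The vector field T₇ of Appendix A. -/
def T7 (z : V43) : V43 := -(zc 3 z • e 39)

/-- The coordinate `zc n` as a continuous linear functional. It is zero for `43 < n`, matching the
default value of `zc`. -/
def zcL (n : ℕ) : V43 →L[ℝ] ℝ :=
  if h : n - 1 < 43 then ContinuousLinearMap.proj (⟨n - 1, h⟩ : Fin 43) else 0

lemma zcL_apply (n : ℕ) (z : V43) : zcL n z = zc n z := by
  unfold zcL zc
  split_ifs <;> rfl

lemma hasFDerivAt_zc (n : ℕ) (z : V43) : HasFDerivAt (zc n) (zcL n) z := by
  have h : zc n = zcL n := funext fun w => (zcL_apply n w).symm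
  rw [h]
  exact (zcL n).hasFDerivAt

lemma zc_add (n : ℕ) (v w : V43) : zc n (v + w) = zc n v + zc n w := by
  simp only [← zcL_apply, map_add]

lemma zc_sub (n : ℕ) (v w : V43) : zc n (v - w) = zc n v - zc n w := by
  simp only [← zcL_apply, map_sub]

lemma zc_neg (n : ℕ) (v : V43) : zc n (-v) = -zc n v := by
  simp only [← zcL_apply, map_neg]

lemma zc_smul (n : ℕ) (c : ℝ) (v : V43) : zc n (c • v) = c * zc n v := by
  simp only [← zcL_apply, map_smul, smul_eq_mul]

lemma zc_e (n m : ℕ) : zc n (e m) = if n - 1 < 43 ∧ n - 1 = m - 1 then 1 else 0 := by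
  unfold zc e
  split_ifs <;> simp_all <;> omega

lemma fderiv_T4 (z v : V43) : fderiv ℝ T4 z v =
    -(zc 3 v • e 5) - (4 * zc 4 v) • e 25 + zc 8 v • e 27
    + zc 11 v • e 30 + (2 * zc 13 v) • e 32 + zc 14 v • e 33
    - (10 * zc 5 v) • e 35 - (3 * zc 6 v) • e 36 + (2 * zc 28 v - 2 * zc 7 v) • e 37
    - zc 8 v • e 38 - (20 * zc 25 v) • e 39
    - (zc 40 z * zc 3 v + zc 3 z * zc 40 v) • e 43 := by
  have c := fun n => hasFDerivAt_zc n z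
  have h : HasFDerivAt T4 _ z :=
    ((c 3).smul_const (e 5)).neg.sub_const (e 7)
      |>.sub (((c 4).const_mul 4).smul_const (e 25))
      |>.add ((c 8).smul_const (e 27))
      |>.sub_const ((3 : ℝ) • e 28)
      |>.add ((c 11).smul_const (e 30))
      |>.add (((c 13).const_mul 2).smul_const (e 32))
      |>.add ((c 14).smul_const (e 33))
      |>.sub (((c 5).const_mul 10).smul_const (e 35))
      |>.sub (((c 6).const_mul 3).smul_const (e 36))
      |>.add ((((c 28).const_mul 2).sub ((c 7).const_mul 2)).smul_const (e 37))
      |>.sub ((c 8).smul_const (e 38))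
      |>.sub (((c 25).const_mul 20).smul_const (e 39))
      |>.sub (((c 40).mul (c 3)).smul_const (e 43))
  rw [h.fderiv]
  simp [zcL_apply]

lemma fderiv_T5 (z v : V43) : fderiv ℝ T5 z v =
    -(zc 3 v • e 25) - (5 * zc 4 v) • e 35 + zc 8 v • e 37 - (15 * zc 5 v) • e 39 := by
  have c := fun n => hasFDerivAt_zc n z
  have h : HasFDerivAt T5 _ z :=
    ((c 3).smul_const (e 25)).neg.sub_const (e 27)
      |>.sub (((c 4).const_mul 5).smul_const (e 35))
      |>.add ((c 8).smul_const (e 37))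
      |>.sub_const ((3 : ℝ) • e 38)
      |>.sub (((c 5).const_mul 15).smul_const (e 39))
  rw [h.fderiv]
  simp [zcL_apply]

lemma fderiv_T6 (z v : V43) : fderiv ℝ T6 z v =
    -(zc 3 v • e 35) - (6 * zc 4 v) • e 39 := by
  have c := fun n => hasFDerivAt_zc n z
  have h : HasFDerivAt T6 _ z :=
    ((c 3).smul_const (e 35)).neg.sub_const (e 37)
      |>.sub (((c 4).const_mul 6).smul_const (e 39))
  rw [h.fderiv]
  simp [zcL_apply]

lemma fderiv_T7 (z v : V43) : fderiv ℝ T7 z v = -(zc 3 v • e 39) := by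
  have h : HasFDerivAt T7 _ z := ((hasFDerivAt_zc 3 z).smul_const (e 39)).neg
  rw [h.fderiv]
  simp [zcL_apply]

/-- The commutator relations [e₃₂, e₃₃] = 5·e₃₅ and vanishing of all other brackets among
T₄, T₅, T₆, T₇ (Appendix B), where the Lie bracket of vector fields is
[V, W](z) = DW(z)(V(z)) − DV(z)(W(z)). -/
theorem stmt11 :
    (∀ z : V43, fderiv ℝ T5 z (T4 z) - fderiv ℝ T4 z (T5 z) = (5 : ℝ) • T7 z) ∧
    (∀ z : V43, fderiv ℝ T6 z (T4 z) - fderiv ℝ T4 z (T6 z) = 0) ∧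
    (∀ z : V43, fderiv ℝ T7 z (T4 z) - fderiv ℝ T4 z (T7 z) = 0) ∧
    (∀ z : V43, fderiv ℝ T6 z (T5 z) - fderiv ℝ T5 z (T6 z) = 0) ∧
    (∀ z : V43, fderiv ℝ T7 z (T5 z) - fderiv ℝ T5 z (T7 z) = 0) ∧
    (∀ z : V43, fderiv ℝ T7 z (T6 z) - fderiv ℝ T6 z (T7 z) = 0) := by
  refine ⟨fun z => ?_, fun z => ?_, fun z => ?_, fun z => ?_, fun z => ?_, fun z => ?_⟩
  · simp [fderiv_T4, fderiv_T5, T4, T5, T7, zc_add, zc_sub, zc_neg, zc_smul, zc_e]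
    module
  all_goals
    simp [fderiv_T4, fderiv_T5, fderiv_T6, fderiv_T7, T4, T5, T6, T7,
      zc_add, zc_sub, zc_neg, zc_smul, zc_e]

end
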